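/- arXiv:1412.3025 — 3 statements merged into one kernel-verified Lean document; each statement's English description precedes it below -/
import Mathlib

section
/- Let (M,E,η) be a factorable monoid satisfying the stronger conditions η′(x·s) = η′(η′(x)·s) and η̄(x·s) = η̄(x)·η̄(η′(x)·s) for all x ∈ M and s ∈ E. Then the rewriting system associated with η is complete (in particular, it is noetherian). -/
/-- The word length of `m` with respect to the generating set `E`:
the least `n` such that `m` is a product of `n` elements of `E`. -/
noncomputable def wordLength {M : Type*} [Monoid M] (E : Set M) (m : M) : ℕ :=
  sInf {n | ∃ l : List M, (∀ x ∈ l, x ∈ E) ∧ l.length = n ∧ l.prod = m}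

/-- `E` is a generating set of the monoid `M`. -/
def IsGenSet {M : Type*} [Monoid M] (E : Set M) : Prop :=
  ∀ m : M, ∃ l : List M, (∀ x ∈ l, x ∈ E) ∧ l.prod = m

/-- The pair `(a, b)` is geodesic with respect to `E`. -/
noncomputable def Geodesic {M : Type*} [Monoid M] (E : Set M) (a b : M) : Prop :=
  wordLength E (a * b) = wordLength E a + wordLength E b

/-- A factorization map `η = (η̄, η′)` on `(M, E)`. -/
noncomputable def IsFactorizationMap {M : Type*} [Monoid M] (E : Set M)
    (η : M → M × M) : Prop :=
  (∀ m, (η m).1 * (η m).2 = m) ∧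
  (∀ m, wordLength E m = wordLength E (η m).1 + wordLength E (η m).2) ∧
  (∀ m, m ≠ 1 → (η m).2 ∈ E) ∧
  η 1 = (1, 1)

/-- The map `f₁ : M³ → M³` applying `η` to the product of the two right entries,
with triples written `(x₃, x₂, x₁)`. -/
def f1 {M : Type*} [Monoid M] (η : M → M × M) (p : M × M × M) : M × M × M :=
  (p.1, η (p.2.1 * p.2.2))

/-- The map `f₂ : M³ → M³` applying `η` to the product of the two left entries. -/
def f2 {M : Type*} [Monoid M] (η : M → M × M) (p : M × M × M) : M × M × M :=
  ((η (p.1 * p.2.1)).1, (η (p.1 * p.2.1)).2, p.2.2)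

/-- The sum of the word lengths of the entries of a triple. -/
noncomputable def tnorm {M : Type*} [Monoid M] (E : Set M) (p : M × M × M) : ℕ :=
  wordLength E p.1 + wordLength E p.2.1 + wordLength E p.2.2

/-- `η` is a factorability structure on `(M, E)`: it is a factorization map and the
three maps `f₁f₂f₁f₂`, `f₂f₁f₂`, `f₂f₁f₂f₁ : M³ → M³` are equal in the graded sense. -/
noncomputable def IsFactorable {M : Type*} [Monoid M] (E : Set M) (η : M → M × M) : Prop :=
  IsFactorizationMap E η ∧
  ∀ p : M × M × M,
    (f1 η (f2 η (f1 η (f2 η p))) = f2 η (f1 η (f2 η p)) ∧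
     f2 η (f1 η (f2 η p)) = f2 η (f1 η (f2 η (f1 η p)))) ∨
    (tnorm E (f1 η (f2 η (f1 η (f2 η p)))) < tnorm E p ∧
     tnorm E (f2 η (f1 η (f2 η p))) < tnorm E p ∧
     tnorm E (f2 η (f1 η (f2 η (f1 η p)))) < tnorm E p)

/-- `η` is a weak factorability structure on `(M, E)`. -/
noncomputable def IsWeaklyFactorable {M : Type*} [Monoid M] (E : Set M)
    (η : M → M × M) : Prop :=
  IsFactorizationMap E η ∧
  ∀ x : M, ∀ t ∈ E,
    Geodesic E (η x).2 t →
    Geodesic E (η x).1 (η ((η x).2 * t)).1 →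
    Geodesic E x t ∧
    (η (x * t)).2 = (η ((η x).2 * t)).2 ∧
    (η (x * t)).1 = (η x).1 * (η ((η x).2 * t)).1

/-- `η` satisfies the recognition principle. -/
def RecognitionPrinciple {M : Type*} [Monoid M] (E : Set M) (η : M → M × M) : Prop :=
  ∀ m : M, ∀ a ∈ E, (η (m * a) = (m, a) ↔ η ((η m).2 * a) = ((η m).2, a))


attribute [local instance] Classical.propDecidable

/-- The right-hand side of the rewriting rule associated with the unstable pair `(x, y)`:
the word obtained from the pair `(η̄(x·y), η′(x·y))` by deleting entries equal to `1`. -/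
noncomputable def ruleRHS {M : Type*} [Monoid M] (η : M → M × M) (x y : M) : List M :=
  (if (η (x * y)).1 = 1 then [] else [(η (x * y)).1]) ++
  (if (η (x * y)).2 = 1 then [] else [(η (x * y)).2])

/-- One rewriting step of the rewriting system associated with the factorability
structure `η` on `(M, E)`: some occurrence of an unstable pair `(x, y)` of generators is
replaced by the corresponding right-hand side. -/
noncomputable def Step {M : Type*} [Monoid M] (E : Set M) (η : M → M × M)
    (w z : List M) : Prop :=
  ∃ (u v : List M) (x y : M), x ∈ E ∧ y ∈ E ∧ η (x * y) ≠ (x, y) ∧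
    w = u ++ [x, y] ++ v ∧ z = u ++ ruleRHS η x y ++ v

/-- A word is irreducible if no rewriting rule applies to it. -/
noncomputable def Irr {M : Type*} [Monoid M] (E : Set M) (η : M → M × M)
    (w : List M) : Prop :=
  ¬ ∃ z, Step E η w z

/-- The rewriting system associated with `η` is strongly minimal: every single letter is
irreducible, the right side of every rule is irreducible, and the left side of every
rule is irreducible with respect to the remaining rules. -/
noncomputable def StronglyMinimal {M : Type*} [Monoid M] (E : Set M)
    (η : M → M × M) : Prop :=
  (∀ s ∈ E, Irr E η [s]) ∧
  (∀ x ∈ E, ∀ y ∈ E, η (x * y) ≠ (x, y) → Irr E η (ruleRHS η x y)) ∧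
  (∀ x ∈ E, ∀ y ∈ E, η (x * y) ≠ (x, y) →
    ¬ ∃ (u v : List M) (x' y' : M), x' ∈ E ∧ y' ∈ E ∧ η (x' * y') ≠ (x', y') ∧
        (x', y') ≠ (x, y) ∧ [x, y] = u ++ [x', y'] ++ v)

/-- The rewriting system associated with `η` is noetherian: there is no infinite chain
of rewriting steps between words over the alphabet `E`. -/
noncomputable def Noetherian {M : Type*} [Monoid M] (E : Set M)
    (η : M → M × M) : Prop :=
  ¬ ∃ f : ℕ → List M, (∀ k, ∀ a ∈ f k, a ∈ E) ∧ ∀ k, Step E η (f k) (f (k + 1))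

/-- The rewriting system associated with `η` is convergent: it is noetherian and each
`↔`-equivalence class of words over `E` contains exactly one irreducible word. -/
noncomputable def Convergent {M : Type*} [Monoid M] (E : Set M)
    (η : M → M × M) : Prop :=
  Noetherian E η ∧
  ∀ w : List M, (∀ a ∈ w, a ∈ E) →
    ∃! z : List M, (∀ a ∈ z, a ∈ E) ∧ Relation.EqvGen (Step E η) w z ∧ Irr E η z

/-- The rewriting system associated with `η` is complete. -/
noncomputable def Complete {M : Type*} [Monoid M] (E : Set M) (η : M → M × M) : Prop :=
  StronglyMinimal E η ∧ Convergent E η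

/-!
Noetherianity is the heart of the matter. Call a letter of a word settled if it forms a stable
pair with the product of every block of letters ending just before it. A length-preserving
rewriting step at positions `k`, `k + 1` keeps all letters to the right of `k + 1` that were
settled, by the strong conditions and the recognition principle, while the letter at `k + 1`, which
was unsettled, becomes settled if the one at `k` was.
Weighting the unsettled letter at position `j` by `2 ^ j`, the weight of the word never increases,
and it strictly decreases when the step takes place at position `0`, since the first letter is
always settled. A step at position `k` therefore lowers the weight of the suffix starting at `k` and
raises that of no longer suffix, so the list of the weights of all suffixes, longest first,
decreases in the shortlex order.

Uniqueness of normal forms is the recognition principle: in an irreducible word every letter is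
the one that `η` splits off from the product of the letters up to it.
-/

section StrongFactorable

variable {M : Type*} [Monoid M] {E : Set M} {η : M → M × M}

theorem wordLength_prod_le {l : List M} (hl : ∀ x ∈ l, x ∈ E) :
    wordLength E l.prod ≤ l.length :=
  Nat.sInf_le ⟨l, hl, rfl, rfl⟩

theorem exists_list_length_eq_wordLength (hgen : IsGenSet E) (m : M) :
    ∃ l : List M, (∀ x ∈ l, x ∈ E) ∧ l.length = wordLength E m ∧ l.prod = m := by
  obtain ⟨l, hl, hm⟩ := hgen m
  exact Nat.sInf_mem
    (s := {n | ∃ l : List M, (∀ x ∈ l, x ∈ E) ∧ l.length = n ∧ l.prod = m})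
    ⟨l.length, l, hl, rfl, hm⟩

theorem eq_one_of_wordLength_eq_zero (hgen : IsGenSet E) {m : M}
    (h : wordLength E m = 0) : m = 1 := by
  obtain ⟨l, -, hlen, rfl⟩ := exists_list_length_eq_wordLength hgen m
  rw [h, List.length_eq_zero_iff] at hlen
  rw [hlen, List.prod_nil]

theorem eq_one_or_mem_of_wordLength_le_one (hgen : IsGenSet E) {m : M}
    (h : wordLength E m ≤ 1) : m = 1 ∨ m ∈ E := by
  obtain ⟨l, hl, hlen, rfl⟩ := exists_list_length_eq_wordLength hgen m
  rw [← hlen] at h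
  match l, hl, h with
  | [], _, _ => exact .inl List.prod_nil
  | [a], hl, _ => exact .inr (by simpa using hl)

theorem wordLength_of_mem (h1 : (1 : M) ∉ E) (hgen : IsGenSet E) {s : M} (hs : s ∈ E) :
    wordLength E s = 1 := by
  have hle : wordLength E s ≤ 1 := by
    simpa using wordLength_prod_le (E := E) (l := [s]) (by simpa using hs)
  have hne : wordLength E s ≠ 0 := fun h =>
    h1 (eq_one_of_wordLength_eq_zero hgen h ▸ hs)
  omega

namespace IsFactorizationMap

theorem fst_mul_snd (hη : IsFactorizationMap E η) (m : M) : (η m).1 * (η m).2 = m :=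
  hη.1 m

protected theorem map_one (hη : IsFactorizationMap E η) : η 1 = (1, 1) :=
  hη.2.2.2

theorem map_of_mem (hη : IsFactorizationMap E η) (h1 : (1 : M) ∉ E) (hgen : IsGenSet E)
    {s : M} (hs : s ∈ E) : η s = (1, s) := by
  have hs1 : s ≠ 1 := fun h => h1 (h ▸ hs)
  have hlen := hη.2.1 s
  rw [wordLength_of_mem h1 hgen hs, wordLength_of_mem h1 hgen (hη.2.2.1 s hs1)] at hlen
  have hfst : (η s).1 = 1 := eq_one_of_wordLength_eq_zero hgen (by omega)
  have hsnd : (η s).2 = s := by simpa [hfst] using hη.fst_mul_snd s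
  exact Prod.ext hfst hsnd

theorem snd_eq_one_or_mem (hη : IsFactorizationMap E η) (m : M) :
    (η m).2 = 1 ∨ (η m).2 ∈ E := by
  by_cases hm : m = 1
  · exact .inl (by rw [hm, hη.map_one])
  · exact .inr (hη.2.2.1 m hm)

theorem map_snd (hη : IsFactorizationMap E η) (h1 : (1 : M) ∉ E) (hgen : IsGenSet E) (m : M) :
    η (η m).2 = (1, (η m).2) := by
  rcases hη.snd_eq_one_or_mem m with h | h
  · rw [h, hη.map_one]
  · exact hη.map_of_mem h1 hgen h

theorem fst_mul_eq_one_or_mem (hη : IsFactorizationMap E η) (h1 : (1 : M) ∉ E)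
    (hgen : IsGenSet E) {x y : M} (hx : x ∈ E) (hy : y ∈ E) :
    (η (x * y)).1 = 1 ∨ (η (x * y)).1 ∈ E := by
  by_cases hxy : x * y = 1
  · exact .inl (by rw [hxy, hη.map_one])
  · apply eq_one_or_mem_of_wordLength_le_one hgen
    have hle : wordLength E (x * y) ≤ 2 := by
      simpa using wordLength_prod_le (E := E) (l := [x, y]) (by simp [hx, hy])
    have hlen := hη.2.1 (x * y)
    rw [wordLength_of_mem h1 hgen (hη.2.2.1 _ hxy)] at hlen
    omega

end IsFactorizationMap

/-- Stability of the pair `(a, b)`, for arbitrary elements of `M`: the letters of a word are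
compared with products of several letters. -/
abbrev IsStablePair (η : M → M × M) (a b : M) : Prop :=
  η (a * b) = (a, b)

/-- The stronger conditions on `η`, which determine `η (x * s)` from `η x` and the value of `η` at a
product of at most two generators. -/
def IsStrong (E : Set M) (η : M → M × M) : Prop :=
  ∀ x : M, ∀ s ∈ E,
    (η (x * s)).2 = (η ((η x).2 * s)).2 ∧
    (η (x * s)).1 = (η x).1 * (η ((η x).2 * s)).1

namespace IsStrong

theorem snd_mul (hs : IsStrong E η) (h1 : (1 : M) ∉ E) (hgen : IsGenSet E)
    (hη : IsFactorizationMap E η) (x m : M) :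
    (η (x * m)).2 = (η ((η x).2 * m)).2 := by
  obtain ⟨l, hl, rfl⟩ := hgen m
  induction l using List.reverseRecOn with
  | nil => simp [hη.map_snd h1 hgen]
  | append_singleton l s ih =>
    have hsE : s ∈ E := hl s (by simp)
    have hprefix := ih fun a ha => hl a (by simp [ha])
    simp only [List.prod_append, List.prod_singleton, ← mul_assoc]
    rw [(hs _ s hsE).1, hprefix, ← (hs _ s hsE).1]

-- If `(q, e)` is stable, then `f₂` and `f₂f₁` fix the triple `(η̄ q, η′ q, e)`; so the graded
-- identity cannot lower its norm, and comparing `f₁f₂f₁f₂` with `f₂f₁f₂` shows that `f₁` fixes it.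
theorem recognitionPrinciple (hs : IsStrong E η) (hfac : IsFactorable E η) :
    RecognitionPrinciple E η := by
  obtain ⟨hη, hgraded⟩ := hfac
  intro q e he
  obtain ⟨hsnd, hfst⟩ := hs q e he
  refine ⟨fun h => ?_, fun h => ?_⟩
  · rw [h] at hsnd hfst
    have hf2 : f2 η ((η q).1, (η q).2, e) = ((η q).1, (η q).2, e) := by
      simp only [f2, hη.fst_mul_snd]
    have hf2f1 : f2 η (f1 η ((η q).1, (η q).2, e)) = ((η q).1, (η q).2, e) := by
      simp only [f1, f2, ← hfst, ← hsnd]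
    have hgraded_q := hgraded ((η q).1, (η q).2, e)
    rw [hf2, hf2f1] at hgraded_q
    rcases hgraded_q with ⟨hf1, -⟩ | ⟨-, hlt, -⟩
    · exact congrArg Prod.snd hf1
    · exact absurd hlt (lt_irrefl _)
  · rw [h] at hsnd hfst
    exact Prod.ext (hfst.trans (hη.fst_mul_snd q)) hsnd

theorem isStablePair_snd_mul_iff (hs : IsStrong E η) (hrec : RecognitionPrinciple E η)
    (h1 : (1 : M) ∉ E) (hgen : IsGenSet E) (hη : IsFactorizationMap E η) (x m : M) {z : M}
    (hz : z ∈ E) : IsStablePair η ((η x).2 * m) z ↔ IsStablePair η (x * m) z := by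
  rw [IsStablePair, IsStablePair, hrec _ z hz, hrec (x * m) z hz, hs.snd_mul h1 hgen hη x m]

theorem isStablePair_mul_fst_snd (hs : IsStrong E η) (hη : IsFactorizationMap E η) {m x y : M}
    (hy : y ∈ E) (h : IsStablePair η m x) :
    IsStablePair η (m * (η (x * y)).1) (η (x * y)).2 := by
  obtain ⟨hsnd, hfst⟩ := hs (m * x) y hy
  rw [h] at hsnd hfst
  rw [IsStablePair, mul_assoc, hη.fst_mul_snd, ← mul_assoc]
  exact Prod.ext hfst hsnd

end IsStrong

/-- The letter `x` is settled after the word `u`: it forms a stable pair with the product of every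
suffix of `u`. With `u` alone in place of all its suffixes, the right letter of an unstable pair
could be settled, and then become unsettled when that pair is rewritten. -/
def IsSettled (η : M → M × M) (u : List M) (x : M) : Prop :=
  ∀ s, s <:+ u → IsStablePair η s.prod x

theorem isSettled_nil_iff {x : M} : IsSettled η [] x ↔ IsStablePair η 1 x := by
  simp [IsSettled]

theorem isSettled_cons_iff {c : M} {u : List M} {x : M} :
    IsSettled η (c :: u) x ↔ IsStablePair η (c :: u).prod x ∧ IsSettled η u x := by
  simp only [IsSettled, List.suffix_cons_iff, forall_eq_or_imp]

theorem isSettled_nil_of_mem (h1 : (1 : M) ∉ E) (hgen : IsGenSet E)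
    (hη : IsFactorizationMap E η) {x : M} (hx : x ∈ E) : IsSettled η [] x :=
  isSettled_nil_iff.2 (by rw [IsStablePair, one_mul, hη.map_of_mem h1 hgen hx])

namespace IsSettled

theorem isStablePair_of_append_singleton {u : List M} {x y : M}
    (h : IsSettled η (u ++ [x]) y) : IsStablePair η x y := by
  simpa using h [x] (List.suffix_append u [x])

theorem append_fst_snd (hs : IsStrong E η) (h1 : (1 : M) ∉ E) (hgen : IsGenSet E)
    (hη : IsFactorizationMap E η) {u : List M} {x y : M} (hy : y ∈ E) (h : IsSettled η u x) :
    IsSettled η (u ++ [(η (x * y)).1]) (η (x * y)).2 := by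
  intro s hsuffix
  rcases List.suffix_concat_iff.1 hsuffix with rfl | ⟨t, rfl, ht⟩
  · rw [IsStablePair, List.prod_nil, one_mul, hη.map_snd h1 hgen]
  · rw [List.prod_append, List.prod_singleton]
    exact hs.isStablePair_mul_fst_snd hη hy (h t ht)

theorem replace_pair (hs : IsStrong E η) (hrec : RecognitionPrinciple E η)
    (h1 : (1 : M) ∉ E) (hgen : IsGenSet E) (hη : IsFactorizationMap E η) {u t : List M}
    {x y z : M} (hz : z ∈ E) (h : IsSettled η (u ++ [x, y] ++ t) z) :
    IsSettled η (u ++ [(η (x * y)).1, (η (x * y)).2] ++ t) z := by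
  induction u with
  | nil =>
    simp only [List.nil_append, List.cons_append, isSettled_cons_iff, List.prod_cons,
      ← mul_assoc] at h ⊢
    obtain ⟨hxyt, -, ht⟩ := h
    refine ⟨?_, (hs.isStablePair_snd_mul_iff hrec h1 hgen hη _ t.prod hz).2 hxyt, ht⟩
    rwa [hη.fst_mul_snd]
  | cons c u ih =>
    have hprod : (c :: (u ++ [(η (x * y)).1, (η (x * y)).2] ++ t)).prod
        = (c :: (u ++ [x, y] ++ t)).prod := by
      simp only [List.prod_append, List.prod_cons, List.prod_nil, mul_one, hη.fst_mul_snd]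
    simp only [List.cons_append] at h ⊢
    obtain ⟨hc, hu⟩ := isSettled_cons_iff.1 h
    exact isSettled_cons_iff.2 ⟨hprod ▸ hc, ih hu⟩

end IsSettled

/-- The letter weight of `x` after the word `u`: zero if `x` is settled, and otherwise a power of
two that exceeds the total weight of the letters to its left. -/
noncomputable def letterWeight (η : M → M × M) (u : List M) (x : M) : ℕ :=
  if IsSettled η u x then 0 else 2 ^ u.length

theorem letterWeight_of_isSettled {u : List M} {x : M} (h : IsSettled η u x) :
    letterWeight η u x = 0 :=
  if_pos h

theorem letterWeight_of_not_isSettled {u : List M} {x : M} (h : ¬ IsSettled η u x) :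
    letterWeight η u x = 2 ^ u.length :=
  if_neg h

theorem letterWeight_le (η : M → M × M) (u : List M) (x : M) :
    letterWeight η u x ≤ 2 ^ u.length := by
  unfold letterWeight
  split_ifs <;> simp

theorem letterWeight_le_letterWeight {u u' : List M} {x : M} (hlen : u'.length = u.length)
    (h : IsSettled η u x → IsSettled η u' x) : letterWeight η u' x ≤ letterWeight η u x := by
  by_cases hx : IsSettled η u x
  · simp [letterWeight_of_isSettled (h hx)]
  · rw [letterWeight_of_not_isSettled hx, ← hlen]
    exact letterWeight_le η u' x

/-- The total letter weight of `v`, read as a continuation of the word `u`. The weight of a word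
`w` is `unsettledWeight η [] w`. -/
noncomputable def unsettledWeight (η : M → M × M) : List M → List M → ℕ
  | _, [] => 0
  | u, x :: v => letterWeight η u x + unsettledWeight η (u ++ [x]) v

theorem unsettledWeight_append (u v w : List M) :
    unsettledWeight η u (v ++ w) = unsettledWeight η u v + unsettledWeight η (u ++ v) w := by
  induction v generalizing u with
  | nil => simp [unsettledWeight]
  | cons x v ih => simp [unsettledWeight, ih, add_assoc]

theorem unsettledWeight_replace_pair_left_le (hs : IsStrong E η)
    (hrec : RecognitionPrinciple E η) (h1 : (1 : M) ∉ E) (hgen : IsGenSet E)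
    (hη : IsFactorizationMap E η) (u t : List M) {v : List M} (x y : M) (hv : ∀ a ∈ v, a ∈ E) :
    unsettledWeight η (u ++ [(η (x * y)).1, (η (x * y)).2] ++ t) v
      ≤ unsettledWeight η (u ++ [x, y] ++ t) v := by
  induction v generalizing t with
  | nil => exact le_rfl
  | cons z v ih =>
    obtain ⟨hz, hv⟩ := List.forall_mem_cons.1 hv
    have htail := ih (t ++ [z]) hv
    simp only [← List.append_assoc] at htail
    exact Nat.add_le_add (letterWeight_le_letterWeight (by simp)
      (IsSettled.replace_pair hs hrec h1 hgen hη hz)) htail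

theorem unsettledWeight_pair_lt_of_isSettled (hs : IsStrong E η) (h1 : (1 : M) ∉ E)
    (hgen : IsGenSet E) (hη : IsFactorizationMap E η) {u : List M} {x y : M} (hy : y ∈ E)
    (hxy : ¬ IsStablePair η x y) (hx : IsSettled η u x) :
    unsettledWeight η u [(η (x * y)).1, (η (x * y)).2] < unsettledWeight η u [x, y] := by
  have hunsettled : ¬ IsSettled η (u ++ [x]) y := fun h => hxy h.isStablePair_of_append_singleton
  simp only [unsettledWeight, letterWeight_of_isSettled hx, zero_add, add_zero,
    letterWeight_of_isSettled (hx.append_fst_snd hs h1 hgen hη hy),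
    letterWeight_of_not_isSettled hunsettled]
  calc letterWeight η u (η (x * y)).1 ≤ 2 ^ u.length := letterWeight_le ..
    _ < 2 ^ (u ++ [x]).length := Nat.pow_lt_pow_right (by norm_num) (by simp)

theorem unsettledWeight_pair_le (hs : IsStrong E η) (h1 : (1 : M) ∉ E)
    (hgen : IsGenSet E) (hη : IsFactorizationMap E η) {u : List M} {x y : M} (hy : y ∈ E)
    (hxy : ¬ IsStablePair η x y) :
    unsettledWeight η u [(η (x * y)).1, (η (x * y)).2] ≤ unsettledWeight η u [x, y] := by
  by_cases hx : IsSettled η u x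
  · exact (unsettledWeight_pair_lt_of_isSettled hs h1 hgen hη hy hxy hx).le
  · have hunsettled : ¬ IsSettled η (u ++ [x]) y :=
      fun h => hxy h.isStablePair_of_append_singleton
    have hfst := letterWeight_le η u (η (x * y)).1
    have hsnd := letterWeight_le η (u ++ [(η (x * y)).1]) (η (x * y)).2
    simp only [unsettledWeight, letterWeight_of_not_isSettled hx,
      letterWeight_of_not_isSettled hunsettled, List.length_append, List.length_singleton]
      at hfst hsnd ⊢
    omega

theorem unsettledWeight_replace_pair_le (hs : IsStrong E η)
    (hrec : RecognitionPrinciple E η) (h1 : (1 : M) ∉ E) (hgen : IsGenSet E)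
    (hη : IsFactorizationMap E η) (u : List M) {v : List M} {x y : M} (hy : y ∈ E)
    (hv : ∀ a ∈ v, a ∈ E) (hxy : ¬ IsStablePair η x y) :
    unsettledWeight η [] (u ++ [(η (x * y)).1, (η (x * y)).2] ++ v)
      ≤ unsettledWeight η [] (u ++ [x, y] ++ v) := by
  have hright := unsettledWeight_replace_pair_left_le hs hrec h1 hgen hη u [] x y hv
  simp only [List.append_nil] at hright
  simp only [unsettledWeight_append, List.nil_append]
  gcongr
  exact unsettledWeight_pair_le hs h1 hgen hη hy hxy

theorem unsettledWeight_replace_head_pair_lt (hs : IsStrong E η)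
    (hrec : RecognitionPrinciple E η) (h1 : (1 : M) ∉ E) (hgen : IsGenSet E)
    (hη : IsFactorizationMap E η) {v : List M} {x y : M} (hx : x ∈ E) (hy : y ∈ E)
    (hv : ∀ a ∈ v, a ∈ E) (hxy : ¬ IsStablePair η x y) :
    unsettledWeight η [] ([(η (x * y)).1, (η (x * y)).2] ++ v)
      < unsettledWeight η [] ([x, y] ++ v) := by
  simp only [unsettledWeight_append]
  exact add_lt_add_of_lt_of_le
    (unsettledWeight_pair_lt_of_isSettled hs h1 hgen hη hy hxy
      (isSettled_nil_of_mem h1 hgen hη hx))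
    (by simpa using unsettledWeight_replace_pair_left_le hs hrec h1 hgen hη [] [] x y hv)

/-- The weights of all suffixes of a word, from the longest to the shortest. Compared in the
shortlex order, they form the termination measure of the rewriting system. -/
noncomputable def suffixWeights (η : M → M × M) (w : List M) : List ℕ :=
  w.tails.map (unsettledWeight η [])

theorem suffixWeights_cons (x : M) (w : List M) :
    suffixWeights η (x :: w) = unsettledWeight η [] (x :: w) :: suffixWeights η w := by
  rw [suffixWeights, List.tails_cons, List.map_cons, suffixWeights]

theorem length_suffixWeights (w : List M) : (suffixWeights η w).length = w.length + 1 := by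
  rw [suffixWeights, List.length_map, List.length_tails]

theorem suffixWeights_replace_pair_shortlex (hs : IsStrong E η)
    (hrec : RecognitionPrinciple E η) (h1 : (1 : M) ∉ E) (hgen : IsGenSet E)
    (hη : IsFactorizationMap E η) (u : List M) {v : List M} {x y : M} (hx : x ∈ E) (hy : y ∈ E)
    (hv : ∀ a ∈ v, a ∈ E) (hxy : ¬ IsStablePair η x y) :
    List.Shortlex (· < ·) (suffixWeights η (u ++ [(η (x * y)).1, (η (x * y)).2] ++ v))
      (suffixWeights η (u ++ [x, y] ++ v)) := by
  induction u with
  | nil =>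
    refine .of_lex (by simp [length_suffixWeights]) ?_
    simp only [List.nil_append, List.cons_append, suffixWeights_cons]
    exact .rel (unsettledWeight_replace_head_pair_lt hs hrec h1 hgen hη hx hy hv hxy)
  | cons c u ih =>
    have hle := unsettledWeight_replace_pair_le hs hrec h1 hgen hη (c :: u) hy hv hxy
    simp only [List.cons_append, suffixWeights_cons] at hle ⊢
    rcases hle.lt_or_eq with hlt | heq
    · exact .of_lex (by simp [length_suffixWeights]) (.rel hlt)
    · rw [heq]
      exact ih.cons

theorem mem_of_mem_ruleRHS (h1 : (1 : M) ∉ E) (hgen : IsGenSet E)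
    (hη : IsFactorizationMap E η) {x y a : M} (hx : x ∈ E) (hy : y ∈ E)
    (ha : a ∈ ruleRHS η x y) : a ∈ E := by
  have hfst := hη.fst_mul_eq_one_or_mem h1 hgen hx hy
  have hsnd := hη.snd_eq_one_or_mem (x * y)
  unfold ruleRHS at ha
  grind

theorem prod_ruleRHS (hη : IsFactorizationMap E η) (x y : M) :
    (ruleRHS η x y).prod = x * y := by
  have hmul := hη.fst_mul_snd (x * y)
  unfold ruleRHS
  split_ifs <;> simp_all

theorem ruleRHS_length_lt_or_eq (η : M → M × M) (x y : M) :
    (ruleRHS η x y).length < 2 ∨ ruleRHS η x y = [(η (x * y)).1, (η (x * y)).2] := by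
  unfold ruleRHS
  split_ifs <;> simp

namespace Step

theorem mem (h1 : (1 : M) ∉ E) (hgen : IsGenSet E) (hη : IsFactorizationMap E η)
    {w z : List M} (h : Step E η w z) (hw : ∀ a ∈ w, a ∈ E) : ∀ a ∈ z, a ∈ E := by
  obtain ⟨u, v, x, y, hx, hy, -, rfl, rfl⟩ := h
  simp only [List.forall_mem_append] at hw ⊢
  exact ⟨⟨hw.1.1, fun a => mem_of_mem_ruleRHS h1 hgen hη hx hy⟩, hw.2⟩

theorem prod_eq (hη : IsFactorizationMap E η) {w z : List M} (h : Step E η w z) :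
    w.prod = z.prod := by
  obtain ⟨u, v, x, y, -, -, -, rfl, rfl⟩ := h
  simp [prod_ruleRHS hη, mul_assoc]

theorem suffixWeights_shortlex (hs : IsStrong E η) (hrec : RecognitionPrinciple E η)
    (h1 : (1 : M) ∉ E) (hgen : IsGenSet E) (hη : IsFactorizationMap E η) {w z : List M}
    (h : Step E η w z) (hw : ∀ a ∈ w, a ∈ E) :
    List.Shortlex (· < ·) (suffixWeights η z) (suffixWeights η w) := by
  obtain ⟨u, v, x, y, hx, hy, hxy, rfl, rfl⟩ := h
  rcases ruleRHS_length_lt_or_eq η x y with hlen | hpair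
  · refine .of_length_lt ?_
    simp only [length_suffixWeights, List.length_append, List.length_cons, List.length_nil]
    omega
  · rw [hpair]
    exact suffixWeights_replace_pair_shortlex hs hrec h1 hgen hη u hx hy
      (fun a ha => hw a (List.mem_append_right _ ha)) hxy

end Step

theorem prod_eq_of_eqvGen_step (hη : IsFactorizationMap E η) {w z : List M}
    (h : Relation.EqvGen (Step E η) w z) : w.prod = z.prod := by
  induction h with
  | rel _ _ h => exact h.prod_eq hη
  | refl => rfl
  | symm _ _ _ ih => exact ih.symm
  | trans _ _ _ _ _ ih₁ ih₂ => exact ih₁.trans ih₂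

theorem wellFounded_step (hs : IsStrong E η) (hrec : RecognitionPrinciple E η)
    (h1 : (1 : M) ∉ E) (hgen : IsGenSet E) (hη : IsFactorizationMap E η) :
    WellFounded fun z w : List M => (∀ a ∈ w, a ∈ E) ∧ Step E η w z :=
  Subrelation.wf (fun ⟨hw, hstep⟩ => hstep.suffixWeights_shortlex hs hrec h1 hgen hη hw)
    (InvImage.wf (suffixWeights η) (List.Shortlex.wf wellFounded_lt))

theorem noetherian_of_wellFounded
    (hwf : WellFounded fun z w : List M => (∀ a ∈ w, a ∈ E) ∧ Step E η w z) :
    Noetherian E η := by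
  rintro ⟨f, hf, hstep⟩
  exact (wellFounded_iff_isEmpty_descending_chain.1 hwf).false ⟨f, fun k => ⟨hf k, hstep k⟩⟩

theorem exists_irr_of_wellFounded (h1 : (1 : M) ∉ E) (hgen : IsGenSet E)
    (hη : IsFactorizationMap E η)
    (hwf : WellFounded fun z w : List M => (∀ a ∈ w, a ∈ E) ∧ Step E η w z)
    {w : List M} (hw : ∀ a ∈ w, a ∈ E) :
    ∃ z : List M, (∀ a ∈ z, a ∈ E) ∧ Relation.EqvGen (Step E η) w z ∧ Irr E η z := by
  obtain ⟨z, ⟨hz, hwz⟩, hmin⟩ := hwf.has_min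
    {z | (∀ a ∈ z, a ∈ E) ∧ Relation.EqvGen (Step E η) w z} ⟨w, hw, .refl w⟩
  refine ⟨z, hz, hwz, fun ⟨z', hstep⟩ => ?_⟩
  exact hmin z' ⟨hstep.mem h1 hgen hη hz, hwz.trans _ _ _ (.rel _ _ hstep)⟩ ⟨hz, hstep⟩

theorem irr_of_length_lt_two {w : List M} (h : w.length < 2) : Irr E η w := by
  rintro ⟨z, u, v, x, y, -, -, -, rfl, -⟩
  simp only [List.length_append, List.length_cons, List.length_nil] at h
  omega

theorem eq_of_pair_eq_append {α : Type*} {u v : List α} {x y x' y' : α}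
    (h : [x, y] = u ++ [x', y'] ++ v) : x = x' ∧ y = y' := by
  have hlen := congrArg List.length h
  simp only [List.length_append, List.length_cons, List.length_nil] at hlen
  have hu : u = [] := List.length_eq_zero_iff.1 (by omega)
  have hv : v = [] := List.length_eq_zero_iff.1 (by omega)
  simpa [hu, hv] using h

theorem irr_pair_of_isStablePair {a b : M} (h : IsStablePair η a b) : Irr E η [a, b] := by
  rintro ⟨z, u, v, x, y, -, -, hxy, heq, -⟩
  obtain ⟨rfl, rfl⟩ := eq_of_pair_eq_append heq
  exact hxy h

namespace Irr

theorem of_append_right {w v : List M} (h : Irr E η (w ++ v)) : Irr E η w := by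
  rintro ⟨z, u, t, x, y, hx, hy, hxy, rfl, rfl⟩
  exact h ⟨_, u, t ++ v, x, y, hx, hy, hxy, by simp, rfl⟩

theorem isStablePair_of_append_pair {l : List M} {x y : M} (hx : x ∈ E) (hy : y ∈ E)
    (h : Irr E η (l ++ [x] ++ [y])) : IsStablePair η x y := by
  by_contra hxy
  exact h ⟨_, l, [], x, y, hx, hy, hxy, by simp, rfl⟩

theorem isStablePair_prod (h1 : (1 : M) ∉ E) (hgen : IsGenSet E)
    (hη : IsFactorizationMap E η) (hrec : RecognitionPrinciple E η) {l : List M} {s : M}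
    (hl : ∀ a ∈ l ++ [s], a ∈ E) (h : Irr E η (l ++ [s])) : IsStablePair η l.prod s := by
  have hs : s ∈ E := hl s (by simp)
  induction l using List.reverseRecOn generalizing s with
  | nil => rw [IsStablePair, List.prod_nil, one_mul, hη.map_of_mem h1 hgen hs]
  | append_singleton l t ih =>
    have hl' : ∀ a ∈ l ++ [t], a ∈ E := fun a ha => hl a (List.mem_append_left _ ha)
    have ht : t ∈ E := hl' t (by simp)
    have hprod : η (l ++ [t]).prod = (l.prod, t) := by
      rw [List.prod_append, List.prod_singleton]
      exact ih hl' h.of_append_right ht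
    refine (hrec _ s hs).2 ?_
    rw [hprod]
    exact h.isStablePair_of_append_pair ht hs

theorem prod_append_singleton_ne_one (h1 : (1 : M) ∉ E) (hgen : IsGenSet E)
    (hη : IsFactorizationMap E η) (hrec : RecognitionPrinciple E η) {l : List M} {s : M}
    (hl : ∀ a ∈ l ++ [s], a ∈ E) (h : Irr E η (l ++ [s])) : (l ++ [s]).prod ≠ 1 := by
  intro hprod
  have hstable := h.isStablePair_prod h1 hgen hη hrec hl
  rw [List.prod_append, List.prod_singleton] at hprod
  rw [IsStablePair, hprod, hη.map_one] at hstable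
  have hs : 1 = s := congrArg Prod.snd hstable
  exact h1 (hs ▸ hl s (by simp))

theorem eq_of_prod_eq (h1 : (1 : M) ∉ E) (hgen : IsGenSet E)
    (hη : IsFactorizationMap E η) (hrec : RecognitionPrinciple E η) {w z : List M}
    (hw : ∀ a ∈ w, a ∈ E) (hz : ∀ a ∈ z, a ∈ E) (hwirr : Irr E η w) (hzirr : Irr E η z)
    (h : w.prod = z.prod) : w = z := by
  induction w using List.reverseRecOn generalizing z with
  | nil =>
    rcases List.eq_nil_or_concat' z with rfl | ⟨z, t, rfl⟩
    · rfl
    · exact absurd h.symm (hzirr.prod_append_singleton_ne_one h1 hgen hη hrec hz)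
  | append_singleton w s ih =>
    rcases List.eq_nil_or_concat' z with rfl | ⟨z, t, rfl⟩
    · exact absurd h (hwirr.prod_append_singleton_ne_one h1 hgen hη hrec hw)
    · simp only [List.prod_append, List.prod_singleton] at h
      have hsplit : (w.prod, s) = (z.prod, t) := by
        rw [← hwirr.isStablePair_prod h1 hgen hη hrec hw, h,
          hzirr.isStablePair_prod h1 hgen hη hrec hz]
      obtain ⟨hprod, rfl⟩ := Prod.ext_iff.1 hsplit
      rw [ih (fun a ha => hw a (List.mem_append_left _ ha))
        (fun a ha => hz a (List.mem_append_left _ ha))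
        hwirr.of_append_right hzirr.of_append_right hprod]

end Irr

theorem IsFactorizationMap.stronglyMinimal (hη : IsFactorizationMap E η) :
    StronglyMinimal E η := by
  refine ⟨fun s _ => irr_of_length_lt_two (by simp), fun x _ y _ _ => ?_, ?_⟩
  · rcases ruleRHS_length_lt_or_eq η x y with hlen | hpair
    · exact irr_of_length_lt_two hlen
    · rw [hpair]
      exact irr_pair_of_isStablePair (by rw [IsStablePair, hη.fst_mul_snd])
  · rintro x _ y _ _ ⟨u, v, x', y', -, -, -, hne, heq⟩
    obtain ⟨rfl, rfl⟩ := eq_of_pair_eq_append heq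
    exact hne rfl

end StrongFactorable

/-- Let `(M, E, η)` be a factorable monoid satisfying the stronger conditions
`η′(x·s) = η′(η′(x)·s)` and `η̄(x·s) = η̄(x)·η̄(η′(x)·s)` for all `x ∈ M` and `s ∈ E`.
Then the rewriting system associated with `η` is complete (in particular noetherian). -/
theorem complete_rewritingSystem_of_strong_factorable
    {M : Type*} [Monoid M] (E : Set M) (h1 : (1 : M) ∉ E) (hgen : IsGenSet E)
    (η : M → M × M) (hfac : IsFactorable E η)
    (hstrong : ∀ x : M, ∀ s ∈ E,
      (η (x * s)).2 = (η ((η x).2 * s)).2 ∧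
      (η (x * s)).1 = (η x).1 * (η ((η x).2 * s)).1) :
    Complete E η := by
  have hs : IsStrong E η := hstrong
  have hη : IsFactorizationMap E η := hfac.1
  have hrec : RecognitionPrinciple E η := hs.recognitionPrinciple hfac
  have hwf := wellFounded_step hs hrec h1 hgen hη
  refine ⟨hη.stronglyMinimal, noetherian_of_wellFounded hwf, fun w hw => ?_⟩
  obtain ⟨z, hz, hwz, hzirr⟩ := exists_irr_of_wellFounded h1 hgen hη hwf hw
  refine ⟨z, ⟨hz, hwz, hzirr⟩, fun z' ⟨hz', hwz', hzirr'⟩ => ?_⟩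
  have hprod : z'.prod = z.prod :=
    (prod_eq_of_eqvGen_step hη hwz').symm.trans (prod_eq_of_eqvGen_step hη hwz)
  exact hzirr'.eq_of_prod_eq h1 hgen hη hrec hz' hz hzirr hprod
end

section
/- Let w ∈ F_n be a right-most, reduced word, written as its decomposition into maximal descending runs w = J_{a_l}^{b_l}·J_{a_{l−1}}^{b_{l−1}}⋯J_{a_1}^{b_1}, where J_a^b denotes the word b·(b−1)⋯a (for a ≤ b) and a_r < b_{r−1} for all 2 ≤ r ≤ l. Then w is small if and only if b_{r+1} < b_r for all 1 ≤ r ≤ l−1. -/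
/-- `w` is a word of the free monoid `F_n` on the letters `{1, …, n}`. -/
def InF (n : ℕ) (w : List ℕ) : Prop := ∀ a ∈ w, 1 ≤ a ∧ a ≤ n

/-- The congruence on a free monoid of words generated by a relation `r`. -/
inductive CongClosure (r : List ℕ → List ℕ → Prop) : List ℕ → List ℕ → Prop
  | rel (u v : List ℕ) {x y : List ℕ} : r x y → CongClosure r (u ++ x ++ v) (u ++ y ++ v)
  | refl (x : List ℕ) : CongClosure r x x
  | symm {x y : List ℕ} : CongClosure r x y → CongClosure r y x
  | trans {x y z : List ℕ} : CongClosure r x y → CongClosure r y z → CongClosure r x z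

/-- The defining relations of `P_n`: `ab = ba` for `|a − b| ≥ 2`, and `aa = a`. -/
inductive PRel (n : ℕ) : List ℕ → List ℕ → Prop
  | comm (a b : ℕ) : 1 ≤ a → a ≤ n → 1 ≤ b → b ≤ n → (a + 2 ≤ b ∨ b + 2 ≤ a) →
      PRel n [a, b] [b, a]
  | idem (a : ℕ) : 1 ≤ a → a ≤ n → PRel n [a, a] [a]

/-- The congruence `∼_P` on `F_n`. -/
def PCong (n : ℕ) : List ℕ → List ℕ → Prop := CongClosure (PRel n)


/-- A word is reduced if it has no two adjacent equal letters. -/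
def Reduced (w : List ℕ) : Prop := w.Chain' (· ≠ ·)

/-- A word `(i_s, …, i_1)` is right-most if whenever two adjacent letters differ by at
least `2`, the left one is smaller. -/
def RightMost (w : List ℕ) : Prop :=
  w.Chain' (fun a b => (a + 2 ≤ b ∨ b + 2 ≤ a) → a < b)

/-- A word `I ∈ F_n` is small if it is not `∼_P`-equivalent to any word of the form
`J·(k+1)·k·(k+1)·K`. -/
def SmallWord (n : ℕ) (w : List ℕ) : Prop :=
  ¬ ∃ (J K : List ℕ) (k : ℕ), 1 ≤ k ∧ k + 1 ≤ n ∧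
      PCong n w (J ++ [k + 1, k, k + 1] ++ K)

/-- The word `J_a^b = b·(b−1)⋯a` (for `a ≤ b`). -/
def Jseg (a b : ℕ) : List ℕ := (List.range' a (b + 1 - a)).reverse

/-!
If `b_{r+1} ≥ b_r = k+1`, then `a_{r+1} ≤ k`, so the run `J_{a_{r+1}}^{b_{r+1}}` contains
`(k+1)·k`, and the letters after `k`, all smaller than `k`, commute with the letter `k+1` that
begins `J_{a_r}^{b_r}`. Moving this letter to the left produces `(k+1)·k·(k+1)`.

Conversely, consider the property of having, between two occurrences of `k+1`, an occurrence of
`k` but none of `k+2`. It is shared by all words containing `(k+1)·k·(k+1)` and, as it is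
recognized by an automaton on which both sides of each defining relation act alike, it is
invariant under `∼_P`. A word whose runs have maxima increasing from left to right does not have
it: a run of maximum greater than `k+1` passes through `k+2` before it reaches `k+1`, and there is
at most one run of maximum `k+1`, before which `k+1` does not occur.
-/

theorem isChain_map_range_sub_iff {α : Type*} {R : α → α → Prop} {f : ℕ → α} {l : ℕ} :
    ((List.range l).map fun i => f (l - i)).IsChain R ↔
      ∀ r, 1 ≤ r → r + 1 ≤ l → R (f (r + 1)) (f r) := by
  simp only [List.isChain_iff_getElem, List.length_map, List.length_range, List.getElem_map,
    List.getElem_range]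
  constructor
  · intro h r hr hrl
    convert h (l - (r + 1)) (by omega) using 2 <;> omega
  · intro h i hi
    convert h (l - (i + 1)) (by omega) (by omega) using 2
    omega

section CongClosure

variable {r : List ℕ → List ℕ → Prop}

theorem CongClosure.append {x y : List ℕ} (h : CongClosure r x y) (u v : List ℕ) :
    CongClosure r (u ++ x ++ v) (u ++ y ++ v) := by
  induction h with
  | rel u' v' h => simpa using CongClosure.rel (u ++ u') (v' ++ v) h
  | refl x => exact .refl _
  | symm _ ih => exact ih.symm
  | trans _ _ ih₁ ih₂ => exact ih₁.trans ih₂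

theorem CongClosure.append_singleton_comm {c : ℕ} {w : List ℕ} (h : ∀ x ∈ w, r [x, c] [c, x]) :
    CongClosure r (w ++ [c]) (c :: w) := by
  induction w with
  | nil => exact .refl _
  | cons x w ih =>
    rw [List.forall_mem_cons] at h
    have move_past_tail : CongClosure r (x :: (w ++ [c])) (x :: c :: w) := by
      simpa using (ih h.2).append [x] []
    exact move_past_tail.trans (.rel [] w h.1)

theorem CongClosure.evalFrom_eq {σ : Type*} {M : DFA ℕ σ}
    (hM : ∀ x y, r x y → ∀ s, M.evalFrom s x = M.evalFrom s y) {x y : List ℕ}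
    (h : CongClosure r x y) (s : σ) : M.evalFrom s x = M.evalFrom s y := by
  induction h with
  | rel u v h => simp only [DFA.evalFrom_of_append, hM _ _ h]
  | refl x => rfl
  | symm _ ih => exact ih.symm
  | trans _ _ ih₁ ih₂ => exact ih₁.trans ih₂

end CongClosure

theorem SmallWord.of_infix {n : ℕ} {v w : List ℕ} (hw : SmallWord n w) (h : v <:+: w) :
    SmallWord n v := by
  obtain ⟨s, t, rfl⟩ := h
  rintro ⟨J, K, k, hk, hkn, hv⟩
  exact hw ⟨s ++ J, K ++ t, k, hk, hkn, by simpa [PCong] using hv.append s t⟩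

section Jseg

variable {a b c x : ℕ}

theorem mem_Jseg : x ∈ Jseg a b ↔ a ≤ x ∧ x ≤ b := by
  simp only [Jseg, List.mem_reverse, List.mem_range'_1]
  omega

theorem Jseg_eq_nil (h : b < a) : Jseg a b = [] :=
  List.eq_nil_iff_forall_not_mem.2 fun _ hx => by rw [mem_Jseg] at hx; omega

theorem Jseg_append_Jseg (hac : a ≤ c + 1) (hcb : c ≤ b) :
    Jseg (c + 1) b ++ Jseg a c = Jseg a b := by
  obtain ⟨i, hi⟩ := Nat.exists_eq_add_of_le hac
  obtain ⟨j, rfl⟩ := Nat.exists_eq_add_of_le hcb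
  rw [Jseg, Jseg, Jseg, ← List.reverse_append, show c + 1 - a = i by omega, hi,
    List.range'_append_1, show i + (c + j + 1 - (a + i)) = c + j + 1 - a by omega]

theorem Jseg_succ (h : a ≤ b + 1) : Jseg a (b + 1) = (b + 1) :: Jseg a b := by
  rw [← Jseg_append_Jseg h b.le_succ]
  simp [Jseg]

theorem pCong_Jseg_append_Jseg {n a b a' k : ℕ} (ha : 1 ≤ a) (hak : a ≤ k) (hkb : k + 1 ≤ b)
    (hkn : k + 1 ≤ n) (ha' : a' ≤ k + 1) :
    PCong n (Jseg a b ++ Jseg a' (k + 1))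
      (Jseg (k + 2) b ++ [k + 1, k, k + 1] ++ (Jseg a (k - 1) ++ Jseg a' k)) := by
  obtain ⟨m, rfl⟩ := Nat.exists_eq_add_of_le' (ha.trans hak)
  have split_run : Jseg a b = Jseg (m + 3) b ++ [m + 2, m + 1] ++ Jseg a m := by
    rw [← Jseg_append_Jseg (c := m + 2) (by omega) hkb, Jseg_succ (by omega), Jseg_succ hak]
    simp
  have move_left : PCong n (Jseg a m ++ [m + 2]) ((m + 2) :: Jseg a m) :=
    CongClosure.append_singleton_comm fun x hx => by
      rw [mem_Jseg] at hx
      exact .comm x (m + 2) (by omega) (by omega) (by omega) hkn (by omega)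
  rw [split_run, Jseg_succ ha']
  simpa [PCong] using move_left.append (Jseg (m + 3) b ++ [m + 2, m + 1]) (Jseg a' (m + 1))

theorem not_smallWord_Jseg_append_Jseg {n a b a' b' : ℕ} (ha : 1 ≤ a) (hab' : a < b')
    (hb'b : b' ≤ b) (hb'n : b' ≤ n) (ha'b' : a' ≤ b') :
    ¬ SmallWord n (Jseg a b ++ Jseg a' b') := by
  obtain ⟨k, rfl⟩ := Nat.exists_eq_add_of_le' (ha.trans hab'.le)
  have hak : a ≤ k := Nat.lt_succ_iff.1 hab'
  exact fun h =>
    h ⟨_, _, k, ha.trans hak, hb'n, pCong_Jseg_append_Jseg ha hak hb'b hb'n ha'b'⟩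

end Jseg

/-- The states of `braidDFA`. -/
inductive BraidState
  /-- No occurrence of `k + 1` since the last `k + 2`. -/
  | idle
  /-- `k + 1` has been read, and neither `k` nor `k + 2` since. -/
  | armed
  /-- `k + 1` and later `k` have been read, and no `k + 2` since. -/
  | primed
  /-- Two occurrences of `k + 1` have been read with some `k` but no `k + 2` in between. -/
  | found

/-- The automaton recognizing the words that have, between two occurrences of `k + 1`, an
occurrence of `k` but none of `k + 2`. It detects the words that are `∼_P`-equivalent to one with
a factor `(k+1)·k·(k+1)`. -/
def braidDFA (k : ℕ) : DFA ℕ BraidState where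
  step
    | .idle, c => if c = k + 1 then .armed else .idle
    | .armed, c => if c = k then .primed else if c = k + 2 then .idle else .armed
    | .primed, c => if c = k + 1 then .found else if c = k + 2 then .idle else .primed
    | .found, _ => .found
  start := .idle
  accept := {.found}

section braidDFA

variable {k : ℕ}

theorem mem_accepts_braidDFA {w : List ℕ} :
    w ∈ (braidDFA k).accepts ↔ (braidDFA k).evalFrom .idle w = .found :=
  Iff.rfl

theorem evalFrom_braidDFA_found (w : List ℕ) : (braidDFA k).evalFrom .found w = .found := by
  induction w with
  | nil => rfl
  | cons _ _ ih => exact ih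

theorem append_braid_append_mem_accepts_braidDFA (J K : List ℕ) :
    J ++ [k + 1, k, k + 1] ++ K ∈ (braidDFA k).accepts := by
  have eval_braid (s : BraidState) : (braidDFA k).evalFrom s [k + 1, k, k + 1] = .found := by
    cases s <;> simp [braidDFA]
  rw [mem_accepts_braidDFA, DFA.evalFrom_of_append, DFA.evalFrom_of_append, eval_braid,
    evalFrom_braidDFA_found]

theorem PRel.evalFrom_braidDFA_eq {n : ℕ} {x y : List ℕ} (h : PRel n x y) (s : BraidState) :
    (braidDFA k).evalFrom s x = (braidDFA k).evalFrom s y := by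
  cases h <;> cases s <;> simp only [braidDFA, DFA.evalFrom_cons, DFA.evalFrom_nil] <;> grind

theorem smallWord_of_forall_notMem_accepts {n : ℕ} {w : List ℕ}
    (h : ∀ k, w ∉ (braidDFA k).accepts) : SmallWord n w := by
  rintro ⟨J, K, k, -, -, hw⟩
  have eval_eq := hw.evalFrom_eq (M := braidDFA k) (fun _ _ => PRel.evalFrom_braidDFA_eq) .idle
  exact h k (eval_eq.trans (append_braid_append_mem_accepts_braidDFA J K))

theorem step_braidDFA_ne_found {c : ℕ} {s : BraidState} (hs : s ≠ .found)
    (hc : c = k + 1 → s ≠ .primed) : (braidDFA k).step s c ≠ .found := by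
  cases s <;> simp only [braidDFA] <;> grind

theorem step_braidDFA_add_two_ne_primed (s : BraidState) :
    (braidDFA k).step s (k + 2) ≠ .primed := by
  cases s <;> simp [braidDFA]

theorem evalFrom_braidDFA_idle {w : List ℕ} (hw : k + 1 ∉ w) :
    (braidDFA k).evalFrom .idle w = .idle := by
  induction w with
  | nil => rfl
  | cons c w ih =>
    rw [List.mem_cons, not_or] at hw
    have step_idle : (braidDFA k).step .idle c = .idle := if_neg (Ne.symm hw.1)
    rw [DFA.evalFrom_cons, step_idle, ih hw.2]

theorem evalFrom_braidDFA_Jseg_ne_found {a b : ℕ} {s : BraidState} (hs : s ≠ .found)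
    (hb : b = k + 1 → s ≠ .primed) : (braidDFA k).evalFrom s (Jseg a b) ≠ .found := by
  induction b generalizing s with
  | zero =>
    rcases a.eq_zero_or_pos with rfl | ha
    · exact step_braidDFA_ne_found hs hb
    · rwa [Jseg_eq_nil ha]
  | succ b ih =>
    rcases lt_or_ge (b + 1) a with h | h
    · rwa [Jseg_eq_nil h]
    · rw [Jseg_succ h, DFA.evalFrom_cons]
      refine ih (step_braidDFA_ne_found hs hb) ?_
      rintro rfl
      exact step_braidDFA_add_two_ne_primed s

end braidDFA

/-- The concatenation of the runs `J_a^b` for `(a, b)` in a list, in the order of the list, which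
is the reverse of the numbering of the runs `J_{a_l}^{b_l}⋯J_{a_1}^{b_1}`. -/
def runWord (L : List (ℕ × ℕ)) : List ℕ := L.flatMap fun p => Jseg p.1 p.2

theorem evalFrom_braidDFA_runWord_ne_found {k : ℕ} {L : List (ℕ × ℕ)} {s : BraidState}
    (hL : L.Pairwise fun p q => p.2 < q.2) (hs : s ≠ .found)
    (hidle : s = .idle ∨ ∀ p ∈ L, k + 1 < p.2) :
    (braidDFA k).evalFrom s (runWord L) ≠ .found := by
  induction L generalizing s with
  | nil => exact hs
  | cons p L ih =>
    rw [List.pairwise_cons] at hL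
    rw [runWord, List.flatMap_cons, DFA.evalFrom_of_append]
    apply ih hL.2
    · apply evalFrom_braidDFA_Jseg_ne_found hs
      rintro hp rfl
      exact absurd (hidle.resolve_left nofun p List.mem_cons_self) hp.not_gt
    · rcases lt_or_ge k p.2 with hkp | hpk
      · exact .inr fun q hq => lt_of_le_of_lt hkp (hL.1 q hq)
      · obtain rfl : s = .idle := hidle.resolve_right fun h => by
          have := h p List.mem_cons_self
          omega
        exact .inl (evalFrom_braidDFA_idle fun h => by rw [mem_Jseg] at h; omega)

theorem SmallWord.isChain_snd_lt {n : ℕ} {L : List (ℕ × ℕ)} (h : SmallWord n (runWord L))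
    (hL : ∀ p ∈ L, 1 ≤ p.1 ∧ p.1 ≤ p.2 ∧ p.2 ≤ n) (hjoin : L.IsChain fun p q => p.1 < q.2) :
    L.IsChain fun p q => p.2 < q.2 := by
  rw [List.isChain_iff_forall_rel_of_append_cons_cons] at hjoin ⊢
  rintro p q L₁ L₂ rfl
  by_contra! hqp
  have infix_pair : Jseg p.1 p.2 ++ Jseg q.1 q.2 <:+: runWord (L₁ ++ p :: q :: L₂) :=
    ⟨runWord L₁, runWord L₂, by simp [runWord]⟩
  obtain ⟨hp, -, -⟩ := hL p (by simp)
  obtain ⟨-, hq, hqn⟩ := hL q (by simp)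
  exact not_smallWord_Jseg_append_Jseg hp (hjoin rfl) hqp hqn hq (h.of_infix infix_pair)

theorem smallWord_runWord_of_isChain {n : ℕ} {L : List (ℕ × ℕ)}
    (hL : L.IsChain fun p q => p.2 < q.2) : SmallWord n (runWord L) := by
  have : IsTrans (ℕ × ℕ) fun p q => p.2 < q.2 := ⟨fun _ _ _ => lt_trans⟩
  exact smallWord_of_forall_notMem_accepts fun _ =>
    evalFrom_braidDFA_runWord_ne_found hL.pairwise nofun (.inl rfl)

/-- Smallness criterion: a right-most reduced word, written as its decomposition
`J_{a_l}^{b_l}·J_{a_{l−1}}^{b_{l−1}}⋯J_{a_1}^{b_1}` into maximal descending runs (with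
`1 ≤ a_r ≤ b_r ≤ n` and `a_r < b_{r−1}` for `2 ≤ r ≤ l`), is small if and only if
`b_{r+1} < b_r` for all `1 ≤ r ≤ l−1`. -/
theorem small_iff_descending_maxima (n l : ℕ) (hl : 1 ≤ l) (a b : ℕ → ℕ)
    (hab : ∀ r, 1 ≤ r → r ≤ l → 1 ≤ a r ∧ a r ≤ b r ∧ b r ≤ n)
    (hjoin : ∀ r, 2 ≤ r → r ≤ l → a r < b (r - 1)) :
    SmallWord n (((List.range l).map (fun i => Jseg (a (l - i)) (b (l - i)))).flatten) ↔
      ∀ r, 1 ≤ r → r + 1 ≤ l → b (r + 1) < b r := by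
  let run (r : ℕ) : ℕ × ℕ := (a r, b r)
  let L : List (ℕ × ℕ) := (List.range l).map fun i => run (l - i)
  have bounds : ∀ p ∈ L, 1 ≤ p.1 ∧ p.1 ≤ p.2 ∧ p.2 ≤ n := by
    simp only [L, List.forall_mem_map, List.mem_range]
    exact fun i hi => hab (l - i) (by omega) (by omega)
  have join : L.IsChain fun p q => p.1 < q.2 :=
    isChain_map_range_sub_iff.2 fun r hr hrl => hjoin (r + 1) (by omega) hrl
  have word_eq :
      ((List.range l).map fun i => Jseg (a (l - i)) (b (l - i))).flatten = runWord L := by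
    rw [runWord, List.flatMap_def, List.map_map]
    rfl
  rw [word_eq]
  calc
    SmallWord n (runWord L) ↔ L.IsChain fun p q => p.2 < q.2 :=
      ⟨fun h => h.isChain_snd_lt bounds join, smallWord_runWord_of_isChain⟩
    _ ↔ ∀ r, 1 ≤ r → r + 1 ≤ l → b (r + 1) < b r := isChain_map_range_sub_iff
end

section
/- Let M be a left locally Gaussian monoid and E ⊆ M∖{1} a generating set closed under llcm and left-complement. Let x ∈ M∖{1} with E-normal form of length p, and let a ∈ E. Then the E-normal form of x·a has length q with q = p or q = p+1. -/
/-- `x` left-divides `y`: `y = x·z` for some `z`. -/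
def LDvd {M : Type*} [Monoid M] (x y : M) : Prop := ∃ z, y = x * z

/-- `y` right-divides `x`: `x = z·y` for some `z`. -/
def RDvd {M : Type*} [Monoid M] (y x : M) : Prop := ∃ z, x = z * y

/-- `c` is a common left-multiple of `a` and `b`. -/
def IsCLM {M : Type*} [Monoid M] (a b c : M) : Prop := RDvd a c ∧ RDvd b c

/-- `c` is a least common left-multiple (llcm) of `a` and `b`: a common left-multiple
that right-divides every common left-multiple. -/
def IsLLCM {M : Type*} [Monoid M] (a b c : M) : Prop :=
  IsCLM a b c ∧ ∀ d, IsCLM a b d → RDvd c d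

/-- `M` is right-cancellative. -/
def RightCancellative (M : Type*) [Monoid M] : Prop :=
  ∀ a b c : M, a * c = b * c → a = b

/-- `M` is left-noetherian: there is no infinite strictly descending chain with respect
to proper left-divisibility. -/
def LeftNoetherian (M : Type*) [Monoid M] : Prop :=
  ¬ ∃ f : ℕ → M, ∀ k, LDvd (f (k + 1)) (f k) ∧ f (k + 1) ≠ f k

/-- `M` is left locally Gaussian: right-cancellative, left-noetherian, and any two
elements admitting a common left-multiple admit a least common left-multiple. -/
def LeftLocallyGaussian (M : Type*) [Monoid M] : Prop :=
  RightCancellative M ∧ LeftNoetherian M ∧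
  ∀ a b : M, (∃ c, IsCLM a b c) → ∃ c, IsLLCM a b c

/-- `E` is closed under least common left-multiples. -/
def ClosedLLCM {M : Type*} [Monoid M] (E : Set M) : Prop :=
  ∀ x ∈ E, ∀ y ∈ E, ∀ c, IsLLCM x y c → c ∈ E

/-- `E` is closed under left-complements: if `c = llcm(x,y)` and `c = w·y`, then the
left-complement `w = x/y` lies in `E ∪ {1}`. -/
def ClosedLComp {M : Type*} [Monoid M] (E : Set M) : Prop :=
  ∀ x ∈ E, ∀ y ∈ E, ∀ c w, IsLLCM x y c → c = w * y → (w ∈ E ∨ w = 1)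

/-- `x ⊲_E y`: every right-divisor of `x·y` lying in `E` right-divides `y`. -/
def Tri {M : Type*} [Monoid M] (E : Set M) (x y : M) : Prop :=
  ∀ d ∈ E, RDvd d (x * y) → RDvd d y

/-- The list `[x_p, …, x_1]` is an `E`-normal sequence: all entries lie in `E` and
`x_{i+1} ⊲_E x_i` for all `i`. -/
def ENormalSeq {M : Type*} [Monoid M] (E : Set M) (l : List M) : Prop :=
  (∀ a ∈ l, a ∈ E) ∧ l.Chain' (Tri E)

/-! For `S = E ∪ {1}`, the length of the normal form of `y` is the least `n` with `y ∈ S ^ n`: the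
last entry of the normal form is right-divisible by every right-divisor of `y` lying in `S`, so no
factorization over `S` is shorter. Multiplying by `a ∈ E` on the right raises this least `n` by at
most one. It cannot lower it, because `S ^ n` is closed under removing a right factor lying in `S`,
by gluing together the squares given by left-complements. -/

section NormalForm

open scoped Pointwise

variable {M : Type*} [Monoid M] {E S : Set M}

lemma LeftNoetherian.subsingleton_units (hM : LeftNoetherian M) : Subsingleton Mˣ := by
  refine subsingleton_of_forall_eq 1 fun u => ?_
  by_contra hu
  -- The powers of a nontrivial unit form a descending chain, which may be periodic.
  refine hM ⟨fun k => ↑(u ^ k), fun k => ⟨⟨↑u⁻¹, ?_⟩, fun h => hu ?_⟩⟩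
  · simp only [pow_succ, Units.val_mul, Units.mul_inv_cancel_right]
  · rwa [Units.val_inj, pow_succ, mul_eq_left] at h

lemma IsLLCM.symm {a b c : M} (h : IsLLCM a b c) : IsLLCM b a c :=
  ⟨h.1.symm, fun d hd => h.2 d hd.symm⟩

/-- The left diamond property: every commutative square `s * u = t * v` with right sides `u, v ∈ S`
is a left multiple by some `c` of a square `v' * u = u' * v` with all its sides in `S`. It stands in
for closure under left-complements and does not refer to least common left-multiples. -/
def ClosedLDiamond (S : Set M) : Prop :=
  ∀ ⦃s t u v : M⦄, u ∈ S → v ∈ S → s * u = t * v →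
    ∃ c, ∃ v' ∈ S, ∃ u' ∈ S, s = c * v' ∧ t = c * u' ∧ v' * u = u' * v

lemma ClosedLComp.closedLDiamond_insert_one [IsRightCancelMul M] (hE : ClosedLComp E)
    (hlcm : ∀ u ∈ E, ∀ v ∈ E, (∃ c, IsCLM u v c) → ∃ c, IsLLCM u v c) :
    ClosedLDiamond (insert 1 E) := by
  rintro s t u v (rfl | hu) (hv : v ∈ insert 1 E) h
  · exact ⟨t, v, hv, 1, Set.mem_insert .., by rw [← h, mul_one], (mul_one t).symm, by simp⟩
  obtain rfl | hv := hv
  · exact ⟨s, 1, Set.mem_insert .., u, .inr hu, (mul_one s).symm, by rw [h, mul_one], by simp⟩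
  have hclm : IsCLM u v (s * u) := ⟨⟨s, rfl⟩, ⟨t, h⟩⟩
  obtain ⟨d, hd⟩ := hlcm u hu v hv ⟨_, hclm⟩
  obtain ⟨⟨v', hv'⟩, ⟨u', hu'⟩⟩ := hd.1
  obtain ⟨c, hc⟩ := hd.2 _ hclm
  refine ⟨c, v', (hE v hv u hu d v' hd.symm hv').symm, u', (hE u hu v hv d u' hd hu').symm,
    mul_right_cancel (b := u) ?_, mul_right_cancel (b := v) ?_, hv'.symm.trans hu'⟩
  · rw [hc, hv', mul_assoc]
  · rw [← h, hc, hu', mul_assoc]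

lemma ClosedLDiamond.mem_pow_of_mul_mem_pow [IsDedekindFiniteMonoid M] [Subsingleton Mˣ]
    (hS : ClosedLDiamond S) {n : ℕ} {s u : M} (hu : u ∈ S) (h : s * u ∈ S ^ n) : s ∈ S ^ n := by
  induction n generalizing s u with
  | zero =>
    rw [pow_zero, Set.mem_one] at h ⊢
    exact (IsUnit.of_mul_eq_one u h).eq_one
  | succ n ih =>
    rw [pow_succ] at h ⊢
    obtain ⟨t, ht, v, hv, htv⟩ := Set.mem_mul.1 h
    obtain ⟨c, v', hv', u', hu', rfl, rfl, -⟩ := hS hu hv htv.symm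
    exact Set.mul_mem_mul (ih hu' ht) hv'

lemma ClosedLDiamond.mem_of_mul_mem [IsDedekindFiniteMonoid M] [Subsingleton Mˣ]
    (hS : ClosedLDiamond S) {s u : M} (hu : u ∈ S) (h : s * u ∈ S) : s ∈ S := by
  rw [← pow_one S] at h ⊢
  exact hS.mem_pow_of_mul_mem_pow hu h

lemma list_prod_mem_pow_length {l : List M} (hl : ∀ a ∈ l, a ∈ S) : l.prod ∈ S ^ l.length :=
  Set.mem_pow.2 ⟨fun i => ⟨l[i], hl _ (List.getElem_mem i.2)⟩, by simp⟩

lemma tri_one_left (b : M) : Tri E 1 b := fun d _ h => by rwa [one_mul] at h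

lemma Tri.rdvd_of_mem_insert_one {x y d : M} (h : Tri E x y) (hd : d ∈ insert 1 E)
    (hdvd : RDvd d (x * y)) : RDvd d y := by
  obtain rfl | hd := hd
  · exact ⟨y, (mul_one y).symm⟩
  · exact h d hd hdvd

lemma Tri.mul_left (hE : ClosedLDiamond (insert 1 E)) {x b c : M} (hb : b ∈ E)
    (hxc : Tri E x c) (hcb : Tri E c b) : Tri E (x * c) b := by
  rintro d hd ⟨s, hs⟩
  obtain ⟨e, v, -, u, hu, -, he, hsq⟩ := hE (.inr hd) (.inr hb) hs.symm
  obtain ⟨w, rfl⟩ := hxc.rdvd_of_mem_insert_one hu ⟨e, he⟩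
  exact hcb d hd ⟨w * v, by rw [mul_assoc, ← hsq, mul_assoc]⟩

namespace ENormalSeq

lemma left_of_append {l m : List M} (h : ENormalSeq E (l ++ m)) : ENormalSeq E l :=
  ⟨fun a ha => h.1 a (List.mem_append_left m ha), h.2.left_of_append⟩

lemma tri_prod (hE : ClosedLDiamond (insert 1 E)) {l : List M} {b : M}
    (h : ENormalSeq E (l ++ [b])) : Tri E l.prod b := by
  induction l using List.reverseRecOn generalizing b with
  | nil => exact tri_one_left b
  | append_singleton l c ih =>
    have hcb : Tri E c b := by
      have hchain := h.2
      rw [List.append_assoc, List.singleton_append] at hchain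
      exact (List.isChain_append_cons_cons.1 hchain).2.1
    rw [List.prod_append, List.prod_singleton]
    exact (ih h.left_of_append).mul_left hE (h.1 b (by simp)) hcb

lemma prod_mem_pow_of_prod_append_singleton_mem [IsRightCancelMul M] [Subsingleton Mˣ]
    (hE : ClosedLDiamond (insert 1 E)) {l : List M} {b : M} {n : ℕ}
    (h : ENormalSeq E (l ++ [b])) (hmem : (l ++ [b]).prod ∈ (insert 1 E : Set M) ^ (n + 1)) :
    l.prod ∈ (insert 1 E : Set M) ^ n := by
  rw [List.prod_append, List.prod_singleton, pow_succ] at hmem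
  obtain ⟨t, ht, v, hv, htv⟩ := Set.mem_mul.1 hmem
  obtain ⟨u, rfl⟩ := (h.tri_prod hE).rdvd_of_mem_insert_one hv ⟨t, htv.symm⟩
  have hu : u ∈ insert 1 E := hE.mem_of_mul_mem hv (.inr (h.1 _ (by simp)))
  obtain rfl : t = l.prod * u := mul_right_cancel (htv.trans (mul_assoc ..).symm)
  exact hE.mem_pow_of_mul_mem_pow hu ht

lemma length_le_of_prod_mem_pow [IsRightCancelMul M] [Subsingleton Mˣ] (h1 : (1 : M) ∉ E)
    (hE : ClosedLDiamond (insert 1 E)) {l : List M} {n : ℕ} (h : ENormalSeq E l)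
    (hmem : l.prod ∈ (insert 1 E : Set M) ^ n) : l.length ≤ n := by
  induction n generalizing l with
  | zero =>
    rw [pow_zero, Set.mem_one] at hmem
    cases l with
    | nil => rfl
    | cons b l =>
      rw [List.prod_cons] at hmem
      have hb : b = 1 := (IsUnit.of_mul_eq_one _ hmem).eq_one
      exact absurd (hb ▸ h.1 b List.mem_cons_self) h1
  | succ n ih =>
    obtain rfl | ⟨l, b, rfl⟩ := l.eq_nil_or_concat'
    · exact Nat.zero_le _
    · rw [List.length_append, List.length_singleton, Nat.add_le_add_iff_right]
      exact ih h.left_of_append (h.prod_mem_pow_of_prod_append_singleton_mem hE hmem)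

lemma prod_mem_pow_iff [IsRightCancelMul M] [Subsingleton Mˣ] (h1 : (1 : M) ∉ E)
    (hE : ClosedLDiamond (insert 1 E)) {l : List M} {n : ℕ} (h : ENormalSeq E l) :
    l.prod ∈ (insert 1 E : Set M) ^ n ↔ l.length ≤ n := by
  refine ⟨h.length_le_of_prod_mem_pow h1 hE, fun hn => ?_⟩
  refine Set.pow_subset_pow_right (Set.mem_insert 1 E) hn ?_
  exact list_prod_mem_pow_length fun a ha => .inr (h.1 a ha)

end ENormalSeq

theorem length_normalForm_mul_generator_general [IsRightCancelMul M] [Subsingleton Mˣ]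
    (h1 : (1 : M) ∉ E) (hE : ClosedLDiamond (insert 1 E)) {l m : List M} {a : M}
    (hl : ENormalSeq E l) (ha : a ∈ E) (hm : ENormalSeq E m) (hprod : m.prod = l.prod * a) :
    m.length = l.length ∨ m.length = l.length + 1 := by
  have ha' : a ∈ insert 1 E := .inr ha
  have hlower : l.length ≤ m.length := by
    rw [← hl.prod_mem_pow_iff h1 hE]
    refine hE.mem_pow_of_mul_mem_pow ha' ?_
    rw [← hprod, hm.prod_mem_pow_iff h1 hE]
  have hupper : m.length ≤ l.length + 1 := by
    rw [← hm.prod_mem_pow_iff h1 hE, hprod, pow_succ]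
    exact Set.mul_mem_mul ((hl.prod_mem_pow_iff h1 hE).2 le_rfl) ha'
  lia

end NormalForm

/-- Let `M` be a left locally Gaussian monoid and `E ⊆ M∖{1}` a generating set closed
under llcm and left-complement. If `x ≠ 1` has `E`-normal form of length `p` and
`a ∈ E`, then the `E`-normal form of `x·a` has length `p` or `p + 1`. -/
theorem length_normalForm_mul_generator
    {M : Type*} [Monoid M] (hM : LeftLocallyGaussian M)
    (E : Set M) (h1 : (1 : M) ∉ E) (hgen : IsGenSet E)
    (hcl : ClosedLLCM E) (hcc : ClosedLComp E)
    (x : M) (hx : x ≠ 1) (l : List M) (hl : l ≠ [])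
    (hnf : ENormalSeq E l) (hprod : l.prod = x)
    (a : M) (ha : a ∈ E)
    (m : List M) (hm : m ≠ [])
    (hnf' : ENormalSeq E m) (hprod' : m.prod = x * a) :
    m.length = l.length ∨ m.length = l.length + 1 := by
  have : IsRightCancelMul M := ⟨fun b c d => hM.1 c d b⟩
  have : Subsingleton Mˣ := hM.2.1.subsingleton_units
  exact length_normalForm_mul_generator_general h1
    (hcc.closedLDiamond_insert_one fun u _ v _ => hM.2.2 u v) hnf ha hnf' (hprod ▸ hprod')
end
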